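/- Let A be a finite nonempty set of positive integers whose elements have greatest common divisor 1, and suppose 1 ∉ A. Then there exists x ∈ ℝ with f_A(x) > 1/3. -/

import Mathlib

/-!
Suppose `fA A ≤ 1/3` everywhere, so that `g = 1/3 - fA A` is nonnegative with mean `1/3`.
The cosine coefficient `∫₀¹ f (a x) cos (2π k x) dx` vanishes when `a ∤ k`
(`integral_f_mul_cos_of_not_dvd`) and equals `-√3 / (2π)` when `k = a`
(`integral_f_mul_cos_self`).

Let `m` be the least element of `A`, and `n` the least element of `A` that is not a multiple of `m`;
the latter exists because `gcd A = 1` and `m ≠ 1`. The only element of `A` dividing `m` is `m`, the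
only one dividing `n` is `n`, and none divides `n - m`. Hence the coefficients of `g` at `m`, `n`
and `n - m` are `√3 / (2π)`, `√3 / (2π)` and `0`. Integrating `g` against
`|1 - e(m x) - e(n x)|² = 3 - 2 cos (2π m x) - 2 cos (2π n x) + 2 cos (2π (n - m) x) ≥ 0`
gives `0 ≤ 1 - 2√3 / π`, which is false because `π < 2√3`.
-/


/-- `f x = 2/3` if the fractional part of `x` lies in `[1/3, 2/3)`, and `-1/3` otherwise. -/
noncomputable def f (x : ℝ) : ℝ :=
  if Int.fract x ∈ Set.Ico (1/3 : ℝ) (2/3 : ℝ) then 2/3 else -1/3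

/-- `fA A x = ∑_{a ∈ A} f (a x)`. -/
noncomputable def fA (A : Finset ℕ) (x : ℝ) : ℝ := ∑ a ∈ A, f (a * x)

open MeasureTheory intervalIntegral Real

lemma measurable_f : Measurable f :=
  Measurable.ite (measurable_fract measurableSet_Ico) measurable_const measurable_const

lemma abs_f_le (x : ℝ) : |f x| ≤ 1 := by
  unfold f
  split_ifs <;> norm_num [abs_le]

lemma f_add_nat (x : ℝ) (n : ℕ) : f (x + n) = f x := by
  simp [f, Int.fract_add_natCast]

lemma f_periodic : Function.Periodic f 1 := fun x => by simpa using f_add_nat x 1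

lemma intervalIntegrable_f_mul (c : ℝ) {h : ℝ → ℝ} (hh : Continuous h) (u v : ℝ) :
    IntervalIntegrable (fun x => f (c * x) * h x) volume u v := by
  have hf : IntervalIntegrable (fun x => f (c * x)) volume u v := by
    refine (intervalIntegrable_const (c := (1 : ℝ))).mono_fun
      (measurable_f.comp (measurable_const_mul c)).aestronglyMeasurable ?_
    filter_upwards with x
    simpa using abs_f_le (c * x)
  exact hf.mul_continuousOn hh.continuousOn

lemma integral_f_mul_zero_one {h : ℝ → ℝ} (hh : Continuous h) :
    ∫ x in (0 : ℝ)..1, f x * h x =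
      (∫ x in (1/3 : ℝ)..(2/3), h x) - (1/3) * ∫ x in (0 : ℝ)..1, h x := by
  have hi : ∀ u v, IntervalIntegrable (fun x => f x * h x) volume u v := fun u v => by
    simpa using intervalIntegrable_f_mul 1 hh u v
  have hc : ∀ u v, IntervalIntegrable h volume u v := fun u v => hh.intervalIntegrable u v
  have fr : ∀ x : ℝ, 0 ≤ x → x < 1 → Int.fract x = x := fun x h0 h1 =>
    Int.fract_eq_self.2 ⟨h0, h1⟩
  have e : ∀ u v c : ℝ, u ≤ v → (∀ x, u < x → x < v → f x = c) →
      ∫ x in u..v, f x * h x = c * ∫ x in u..v, h x := by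
    intro u v c huv hx
    rw [← intervalIntegral.integral_const_mul]
    rw [integral_of_le huv, integral_of_le huv, integral_Ioc_eq_integral_Ioo,
      integral_Ioc_eq_integral_Ioo]
    refine setIntegral_congr_fun measurableSet_Ioo fun x hx' => ?_
    simp only [hx x hx'.1 hx'.2]
  have e1 := e 0 (1/3) (-1/3) (by norm_num) (fun x h0 h1 => by
    rw [f, fr x (by linarith) (by linarith), if_neg]; rintro ⟨h2, h3⟩; linarith)
  have e2 := e (1/3) (2/3) (2/3) (by norm_num) (fun x h0 h1 => by
    rw [f, fr x (by linarith) (by linarith), if_pos]; exact ⟨h0.le, h1⟩)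
  have e3 := e (2/3) 1 (-1/3) (by norm_num) (fun x h0 h1 => by
    rw [f, fr x (by linarith) (by linarith), if_neg]; rintro ⟨h2, h3⟩; linarith)
  rw [← integral_add_adjacent_intervals (hi 0 (1/3)) (hi _ 1),
    ← integral_add_adjacent_intervals (hi (1/3) (2/3)) (hi _ 1),
    ← integral_add_adjacent_intervals (hc 0 (1/3)) (hc _ 1),
    ← integral_add_adjacent_intervals (hc (1/3) (2/3)) (hc _ 1), e1, e2, e3]
  ring

lemma integral_comp_nat_mul {G : ℝ → ℝ} (hG : Function.Periodic G 1)
    (hi : ∀ u v, IntervalIntegrable G volume u v) {a : ℕ} (ha : 0 < a) :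
    ∫ x in (0 : ℝ)..1, G (a * x) = ∫ x in (0 : ℝ)..1, G x := by
  have ha' : (a : ℝ) ≠ 0 := by positivity
  rw [intervalIntegral.integral_comp_mul_left _ ha']
  have := hG.intervalIntegral_add_zsmul_eq (a : ℤ) 0
  simp only [zero_add, zsmul_eq_mul, Int.cast_natCast, mul_one] at this
  specialize this hi
  simp only [mul_zero, mul_one, this, smul_eq_mul]
  field_simp

lemma integral_f_comp_mul {a : ℕ} (ha : 0 < a) : ∫ x in (0 : ℝ)..1, f (a * x) = 0 := by
  rw [integral_comp_nat_mul f_periodic (fun u v => by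
    simpa using intervalIntegrable_f_mul 1 (continuous_const (y := (1 : ℝ))) u v) ha]
  have := integral_f_mul_zero_one (h := fun _ => 1) continuous_const
  simp only [mul_one, intervalIntegral.integral_const, smul_eq_mul] at this
  rw [this]; norm_num

lemma integral_f_mul_cos_self {a : ℕ} (ha : 0 < a) :
    ∫ x in (0 : ℝ)..1, f (a * x) * cos (2 * π * a * x) = -(√3 / (2 * π)) := by
  have hG : Function.Periodic (fun y => f y * cos (2 * π * y)) 1 := fun y => by
    simp only [f_periodic y, mul_add, mul_one, cos_add_two_pi]
  have h1 := integral_comp_nat_mul hG (fun u v => by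
    simpa using intervalIntegrable_f_mul 1 (h := fun y => cos (2 * π * y)) (by fun_prop) u v) ha
  simp only [← mul_assoc] at h1
  rw [h1, integral_f_mul_zero_one (h := fun y => cos (2 * π * y)) (by fun_prop)]
  have hp : (2 * π) ≠ 0 := by positivity
  rw [intervalIntegral.integral_comp_mul_left (fun y => cos y) hp,
    intervalIntegral.integral_comp_mul_left (fun y => cos y) hp, integral_cos, integral_cos]
  have s1 : sin (2 * π * (1/3)) = √3 / 2 := by
    rw [show 2 * π * (1/3) = π - π / 3 by ring, sin_pi_sub, sin_pi_div_three]
  have s2 : sin (2 * π * (2/3)) = -(√3 / 2) := by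
    rw [show 2 * π * (2/3) = π / 3 + π by ring, sin_add_pi, sin_pi_div_three]
  rw [s1, s2]
  simp only [mul_one, mul_zero, sin_two_pi, sin_zero, smul_eq_mul]
  field_simp
  ring

/-- The integrals of `f (a x)` against `cos (2π k x)` and `sin (2π k x)` form a vector that is fixed
by the rotation of angle `2π k / a`, because translating by `1 / a` preserves `f (a x)`. This
rotation is nontrivial when `a ∤ k`. -/
lemma integral_f_mul_cos_of_not_dvd {a k : ℕ} (ha : 0 < a) (hak : ¬ a ∣ k) :
    ∫ x in (0 : ℝ)..1, f (a * x) * cos (2 * π * k * x) = 0 := by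
  have ha' : (a : ℝ) ≠ 0 := by positivity
  set θ : ℝ := 2 * π * k / a with hθ
  set C := ∫ x in (0 : ℝ)..1, f (a * x) * cos (2 * π * k * x) with hC
  set S := ∫ x in (0 : ℝ)..1, f (a * x) * sin (2 * π * k * x) with hS
  have shift : ∀ G : ℝ → ℝ, Function.Periodic G 1 →
      ∫ x in (0 : ℝ)..1, G x = ∫ x in (0 : ℝ)..1, G (x + 1 / a) := by
    intro G hG
    rw [intervalIntegral.integral_comp_add_right, add_comm 1, zero_add,
      hG.intervalIntegral_add_eq (1 / (a : ℝ)) 0, zero_add]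
  have hfa : ∀ x : ℝ, f (a * (x + 1)) = f (a * x) := fun x => by
    rw [mul_add, mul_one, f_add_nat]
  have hfs : ∀ x : ℝ, f (a * (x + 1 / a)) = f (a * x) := fun x => by
    rw [mul_add, mul_one_div_cancel ha', f_periodic]
  have hx1 : ∀ x : ℝ, 2 * π * k * (x + 1) = 2 * π * k * x + k * (2 * π) := fun x => by ring
  have hxs : ∀ x : ℝ, 2 * π * k * (x + 1 / a) = 2 * π * k * x + θ := fun x => by
    rw [hθ]; ring
  have i1 := intervalIntegrable_f_mul a (h := fun x => cos (2 * π * k * x)) (by fun_prop) 0 1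
  have i2 := intervalIntegrable_f_mul a (h := fun x => sin (2 * π * k * x)) (by fun_prop) 0 1
  have eC : C = cos θ * C - sin θ * S := by
    conv_lhs => rw [hC, shift _ (fun x => by
      simp only [hfa, hx1, cos_add_nat_mul_two_pi])]
    rw [hC, hS, ← intervalIntegral.integral_const_mul, ← intervalIntegral.integral_const_mul,
      ← intervalIntegral.integral_sub (i1.const_mul _) (i2.const_mul _)]
    congr 1; ext x
    rw [hfs, hxs, cos_add]; ring
  have eS : S = sin θ * C + cos θ * S := by
    conv_lhs => rw [hS, shift _ (fun x => by
      simp only [hfa, hx1, sin_add_nat_mul_two_pi])]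
    rw [hC, hS, ← intervalIntegral.integral_const_mul, ← intervalIntegral.integral_const_mul,
      ← intervalIntegral.integral_add (i1.const_mul _) (i2.const_mul _)]
    congr 1; ext x
    rw [hfs, hxs, sin_add]; ring
  have hcos : cos θ ≠ 1 := by
    intro h
    obtain ⟨z, hz⟩ := (cos_eq_one_iff θ).1 h
    have h2 : (k : ℝ) = a * z := by
      rw [hθ] at hz
      field_simp at hz
      linarith
    exact hak (Int.natCast_dvd_natCast.1 ⟨z, by exact_mod_cast h2⟩)
  -- `2 - 2 cos θ` is the determinant of the linear system `eC`, `eS`.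
  have key : (2 - 2 * cos θ) * C = 0 := by
    linear_combination (1 - cos θ) * eC - sin θ * eS - C * sin_sq_add_cos_sq θ
  rcases mul_eq_zero.1 key with h | h
  · exact absurd (by linarith) hcos
  · exact h

lemma integral_fA_mul (A : Finset ℕ) {h : ℝ → ℝ} (hh : Continuous h) :
    ∫ x in (0 : ℝ)..1, fA A x * h x = ∑ a ∈ A, ∫ x in (0 : ℝ)..1, f (a * x) * h x := by
  simp only [fA, Finset.sum_mul]
  exact intervalIntegral.integral_finsetSum fun a _ => intervalIntegrable_f_mul a hh 0 1

lemma integral_fA_mul_cos_of_primitive {A : Finset ℕ} (hpos : ∀ a ∈ A, 0 < a) {k : ℕ}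
    (hk : k ∈ A) (hdvd : ∀ a ∈ A, a ∣ k → a = k) :
    ∫ x in (0 : ℝ)..1, fA A x * cos (2 * π * k * x) = -(√3 / (2 * π)) := by
  rw [integral_fA_mul A (h := fun x => cos (2 * π * k * x)) (by fun_prop),
    Finset.sum_eq_single_of_mem k hk fun a ha hne =>
      integral_f_mul_cos_of_not_dvd (hpos a ha) fun hd => hne (hdvd a ha hd),
    integral_f_mul_cos_self (hpos k hk)]

lemma integral_fA_mul_cos_of_forall_not_dvd {A : Finset ℕ} (hpos : ∀ a ∈ A, 0 < a) {k : ℕ}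
    (hdvd : ∀ a ∈ A, ¬ a ∣ k) :
    ∫ x in (0 : ℝ)..1, fA A x * cos (2 * π * k * x) = 0 := by
  rw [integral_fA_mul A (h := fun x => cos (2 * π * k * x)) (by fun_prop)]
  exact Finset.sum_eq_zero fun a ha => integral_f_mul_cos_of_not_dvd (hpos a ha) (hdvd a ha)

lemma integral_cos_two_pi_nat {k : ℕ} (hk : 0 < k) :
    ∫ x in (0 : ℝ)..1, cos (2 * π * k * x) = 0 := by
  have hp : 2 * π * (k : ℝ) ≠ 0 := by positivity
  rw [intervalIntegral.integral_comp_mul_left (fun y => cos y) hp, integral_cos]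
  have : sin (2 * π * k * 1) = 0 := by
    rw [show 2 * π * (k : ℝ) * 1 = 0 + k * (2 * π) by ring, sin_add_nat_mul_two_pi, sin_zero]
  rw [this, mul_zero, sin_zero, sub_self, smul_zero]

/-- The right-hand side is `|1 - exp (i u) - exp (i v)|²`. -/
lemma trig_nonneg (u v : ℝ) : 0 ≤ 3 - 2 * cos u - 2 * cos v + 2 * cos (v - u) := by
  rw [cos_sub]
  nlinarith [sq_nonneg (1 - cos u - cos v), sq_nonneg (sin u + sin v), sin_sq_add_cos_sq u,
    sin_sq_add_cos_sq v]

theorem one_not_in_A (A : Finset ℕ) (hne : A.Nonempty) (hpos : ∀ a ∈ A, 0 < a)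
    (hgcd : A.gcd id = 1) (h1 : 1 ∉ A) :
    ∃ x : ℝ, 1/3 < fA A x := by
  by_contra! hcon
  obtain ⟨m, hm, hmin⟩ := A.exists_min_image id hne
  have hB : (A.filter fun a => ¬ m ∣ a).Nonempty := by
    by_contra hB
    rw [Finset.not_nonempty_iff_eq_empty, Finset.filter_eq_empty_iff] at hB
    have hm1 : m ∣ A.gcd id := Finset.dvd_gcd fun a ha => not_not.1 (hB ha)
    rw [hgcd, Nat.dvd_one] at hm1
    exact h1 (hm1 ▸ hm)
  obtain ⟨n, hn, hnmin⟩ := Finset.exists_min_image _ id hB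
  simp only [Finset.mem_filter, id] at hn hnmin hmin
  obtain ⟨hnA, hmn⟩ := hn
  have hlt : m < n := lt_of_le_of_ne (hmin n hnA) fun h => hmn (h ▸ dvd_rfl)
  have cm := integral_fA_mul_cos_of_primitive hpos hm fun a ha hd =>
    le_antisymm (Nat.le_of_dvd (hpos m hm) hd) (hmin a ha)
  have cn := integral_fA_mul_cos_of_primitive hpos hnA fun a ha hd =>
    le_antisymm (Nat.le_of_dvd (hpos n hnA) hd)
      (hnmin a ⟨ha, fun h => hmn (h.trans hd)⟩)
  have cd := integral_fA_mul_cos_of_forall_not_dvd (k := n - m) hpos fun a ha hd => by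
    have hle := Nat.le_of_dvd (Nat.sub_pos_of_lt hlt) hd
    have hma : m ∣ a := by
      by_contra h
      have := hnmin a ⟨ha, h⟩
      have := hpos m hm
      omega
    exact hmn ((Nat.dvd_sub_iff_left hlt.le dvd_rfl).1 (hma.trans hd))
  have c0 : ∫ x in (0 : ℝ)..1, fA A x * 1 = 0 := by
    rw [integral_fA_mul A (h := fun _ => 1) continuous_const]
    refine Finset.sum_eq_zero fun a ha => ?_
    simpa using integral_f_comp_mul (hpos a ha)
  have ii : ∀ h : ℝ → ℝ, Continuous h →
      IntervalIntegrable (fun x => fA A x * h x) volume 0 1 := by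
    intro h hh
    simp only [fA, Finset.sum_mul]
    have := IntervalIntegrable.sum A fun a _ => intervalIntegrable_f_mul (a : ℝ) hh 0 1
    simpa only [Finset.sum_fn] using this
  have hcont : ∀ k : ℕ, Continuous fun x : ℝ => cos (2 * π * k * x) := fun k => by fun_prop
  -- The integral of `fA A` against the nonnegative kernel, by linearity.
  have hK : ∫ x in (0 : ℝ)..1, fA A x * (3 - 2 * cos (2 * π * m * x) - 2 * cos (2 * π * n * x)
      + 2 * cos (2 * π * (n - m : ℕ) * x)) = 4 * (√3 / (2 * π)) := by
    have : ∀ x : ℝ, fA A x * (3 - 2 * cos (2 * π * m * x) - 2 * cos (2 * π * n * x)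
      + 2 * cos (2 * π * (n - m : ℕ) * x)) = 3 * (fA A x * 1)
        - 2 * (fA A x * cos (2 * π * m * x)) - 2 * (fA A x * cos (2 * π * n * x))
        + 2 * (fA A x * cos (2 * π * (n - m : ℕ) * x)) := fun x => by ring
    simp only [this]
    have j0 := (ii _ (continuous_const (y := (1 : ℝ)))).const_mul 3
    have j1 := (ii _ (hcont m)).const_mul 2
    have j2 := (ii _ (hcont n)).const_mul 2
    have j3 := (ii _ (hcont (n - m))).const_mul 2
    rw [intervalIntegral.integral_add ((j0.sub j1).sub j2) j3,
      intervalIntegral.integral_sub (j0.sub j1) j2, intervalIntegral.integral_sub j0 j1]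
    simp only [intervalIntegral.integral_const_mul, c0, cm, cn, cd]
    ring
  have hK1 : ∫ x in (0 : ℝ)..1, (1/3 : ℝ) * (3 - 2 * cos (2 * π * m * x)
      - 2 * cos (2 * π * n * x) + 2 * cos (2 * π * (n - m : ℕ) * x)) = 1 := by
    have j1 := ((hcont m).intervalIntegrable (μ := volume) 0 1).const_mul 2
    have j2 := ((hcont n).intervalIntegrable (μ := volume) 0 1).const_mul 2
    have j3 := ((hcont (n - m)).intervalIntegrable (μ := volume) 0 1).const_mul 2
    have j0 : IntervalIntegrable (fun _ : ℝ => (3 : ℝ)) volume 0 1 := intervalIntegrable_const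
    rw [intervalIntegral.integral_const_mul,
      intervalIntegral.integral_add ((j0.sub j1).sub j2) j3,
      intervalIntegral.integral_sub (j0.sub j1) j2, intervalIntegral.integral_sub j0 j1]
    simp only [intervalIntegral.integral_const_mul, integral_cos_two_pi_nat (hpos m hm),
      integral_cos_two_pi_nat (hpos n hnA), integral_cos_two_pi_nat (Nat.sub_pos_of_lt hlt),
      intervalIntegral.integral_const]
    norm_num
  have hle : 4 * (√3 / (2 * π)) ≤ 1 := by
    refine hK.symm.trans_le (le_trans ?_ hK1.le)
    have hcK : Continuous fun x : ℝ => 3 - 2 * cos (2 * π * m * x) - 2 * cos (2 * π * n * x)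
      + 2 * cos (2 * π * (n - m : ℕ) * x) := by fun_prop
    refine intervalIntegral.integral_mono_on zero_le_one (ii _ hcK)
      ((hcK.const_mul _).intervalIntegrable _ _) fun x _ => ?_
    refine mul_le_mul_of_nonneg_right (hcon x) ?_
    have := trig_nonneg (2 * π * m * x) (2 * π * n * x)
    rwa [show 2 * π * n * x - 2 * π * m * x = 2 * π * (n - m : ℕ) * x by
      rw [Nat.cast_sub hlt.le]; ring] at this
  have h3 : (1.7 : ℝ) < √3 := lt_sqrt_of_sq_lt (by norm_num)
  have hpi := pi_lt_d2
  have hpi0 := pi_pos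
  rw [← mul_div_assoc, div_le_one (by positivity)] at hle
  linarith
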